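/- arXiv:math/0110056 — 2 statements merged into one kernel-verified Lean document; each statement's English description precedes it below -/
import Mathlib

section
/- For all integers n ≥ 1 and k ≥ 1, the numbers f_{112,121}(n,k) of words in [k]^n avoiding both patterns 112 and 121 satisfy the recurrence f_{112,121}(n,k) = f_{112,121}(n,k-1) + n · f_{112,121}(n-1,k-1) + ∑_{j=2}^{n} f_{112,121}(n-j, k-1). -/
/-- A word `σ ∈ [k]^n` (encoded as `σ : Fin n → Fin k`) contains the pattern `τ`
(encoded as a list of natural numbers) if there is a strictly increasing choice of
positions on which `σ` is order-isomorphic to `τ`. -/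
def WordContains {n k : ℕ} (σ : Fin n → Fin k) (τ : List ℕ) : Prop :=
  ∃ f : Fin τ.length → Fin n, StrictMono f ∧
    ∀ a b : Fin τ.length,
      (σ (f a) < σ (f b) ↔ τ.get a < τ.get b) ∧
      (σ (f a) = σ (f b) ↔ τ.get a = τ.get b)

/-- `avoiders n k T` is the number of words in `[k]^n` that avoid every pattern in `T`,
i.e. `f_T(n,k)`. -/
noncomputable def avoiders (n k : ℕ) (T : Set (List ℕ)) : ℕ :=
  Nat.card {σ : Fin n → Fin k // ∀ τ ∈ T, ¬ WordContains σ τ}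

/-!
Call a word *repeat-dominated* if a letter that occurs twice is at least as large as every letter
after its first occurrence; these are exactly the words avoiding 112 and 121. In such a word, the
positions of the smallest letter either number at most one or form a final segment, and deleting
them leaves an arbitrary repeat-dominated word over one letter fewer. There is one set of positions
of size `0`, there are `n` of size `1`, and there is one final segment of each size from `2` to `n`.
-/

open scoped Finset

section Pattern

theorem cmp_eq_cmp_iff {α β : Type*} [LinearOrder α] [LinearOrder β] {x y : α} {a b : β} :
    cmp x y = cmp a b ↔ (x < y ↔ a < b) ∧ (x = y ↔ a = b) := by
  refine ⟨fun h => ⟨lt_iff_lt_of_cmp_eq_cmp h, eq_iff_eq_of_cmp_eq_cmp h⟩, fun ⟨hlt, heq⟩ => ?_⟩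
  rcases lt_trichotomy a b with h | h | h
  · rw [h.cmp_eq_lt, (hlt.2 h).cmp_eq_lt]
  · rw [h.cmp_eq_eq, (heq.2 h).cmp_eq_eq]
  · have hyx : y < x := lt_of_le_of_ne (not_lt.1 (mt hlt.1 h.not_gt)) (mt (heq.1 ∘ Eq.symm) h.ne')
    rw [h.cmp_eq_gt, hyx.cmp_eq_gt]

variable {n k : ℕ} {σ : Fin n → Fin k}

theorem wordContains_triple_iff {a b c : ℕ} :
    WordContains σ [a, b, c] ↔ ∃ i j l, i < j ∧ j < l ∧
      cmp (σ i) (σ j) = cmp a b ∧ cmp (σ i) (σ l) = cmp a c ∧ cmp (σ j) (σ l) = cmp b c := by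
  constructor
  · rintro ⟨f, hf, h⟩
    exact ⟨f 0, f 1, f 2, hf Fin.zero_lt_one, hf (Fin.lt_def.2 Nat.one_lt_two),
      cmp_eq_cmp_iff.2 (h 0 1), cmp_eq_cmp_iff.2 (h 0 2), cmp_eq_cmp_iff.2 (h 1 2)⟩
  · rintro ⟨i, j, l, hij, hjl, hab, hac, hbc⟩
    refine ⟨![i, j, l], by simp [hij, hjl], fun x y => cmp_eq_cmp_iff.1 ?_⟩
    have hba := cmp_eq_cmp_symm.1 hab
    have hca := cmp_eq_cmp_symm.1 hac
    have hcb := cmp_eq_cmp_symm.1 hbc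
    fin_cases x <;> fin_cases y <;> simp [*]

theorem wordContains_112_iff :
    WordContains σ [1, 1, 2] ↔ ∃ i j l, i < j ∧ j < l ∧ σ i = σ j ∧ σ i < σ l := by
  have eq_11 : cmp 1 1 = Ordering.eq := rfl
  have lt_12 : cmp 1 2 = Ordering.lt := rfl
  simp only [wordContains_triple_iff, eq_11, lt_12, cmp_eq_eq_iff, cmp_eq_lt_iff]
  grind

theorem wordContains_121_iff :
    WordContains σ [1, 2, 1] ↔ ∃ i j l, i < j ∧ j < l ∧ σ i = σ l ∧ σ i < σ j := by
  have eq_11 : cmp 1 1 = Ordering.eq := rfl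
  have lt_12 : cmp 1 2 = Ordering.lt := rfl
  have gt_21 : cmp 2 1 = Ordering.gt := rfl
  simp only [wordContains_triple_iff, eq_11, lt_12, gt_21, cmp_eq_eq_iff, cmp_eq_lt_iff,
    cmp_eq_gt_iff]
  grind

end Pattern

/-- A word is repeat-dominated if a letter that occurs twice is at least as large as every letter
after its first occurrence. Positions and letters range over arbitrary ordered types, so that one
can delete positions and letters without renumbering. -/
def RepeatDominated {ι β : Type*} [LT ι] [LE β] (σ : ι → β) : Prop :=
  ∀ ⦃i j l⦄, i < j → σ i = σ j → i < l → σ l ≤ σ i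

/-- The words with positions in `ι` and letters in `β` that are repeat-dominated. -/
abbrev RepeatDominatedWord (ι β : Type*) [LT ι] [LE β] : Type _ :=
  {σ : ι → β // RepeatDominated σ}

theorem avoids_112_121_iff_repeatDominated {n k : ℕ} (σ : Fin n → Fin k) :
    (∀ τ ∈ ({[1, 1, 2], [1, 2, 1]} : Set (List ℕ)), ¬ WordContains σ τ) ↔ RepeatDominated σ := by
  simp only [Set.mem_insert_iff, Set.mem_singleton_iff, forall_eq_or_imp, forall_eq,
    wordContains_112_iff, wordContains_121_iff]
  constructor
  · rintro ⟨h112, h121⟩ i j l hij heq hil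
    by_contra! hlt
    rcases lt_trichotomy j l with hjl | rfl | hlj
    · exact h112 ⟨i, j, l, hij, hjl, heq, hlt⟩
    · exact hlt.ne heq
    · exact h121 ⟨i, l, j, hil, hlj, heq, hlt⟩
  · refine fun h => ⟨?_, ?_⟩
    · rintro ⟨i, j, l, hij, hjl, heq, hlt⟩
      exact (h hij heq (hij.trans hjl)).not_gt hlt
    · rintro ⟨i, j, l, hij, hjl, heq, hlt⟩
      exact (h (hij.trans hjl) heq hij).not_gt hlt

theorem avoiders_112_121_eq_card (n k : ℕ) :
    avoiders n k {[1, 1, 2], [1, 2, 1]} = Nat.card (RepeatDominatedWord (Fin n) (Fin k)) :=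
  Nat.card_congr (Equiv.subtypeEquivRight avoids_112_121_iff_repeatDominated)

namespace RepeatDominated

variable {ι ι' β γ : Type*}

theorem orderEmbedding_comp_iff [LT ι] [LE β] [LE γ] (f : β ↪o γ)
    {σ : ι → β} : RepeatDominated (f ∘ σ) ↔ RepeatDominated σ := by
  simp [RepeatDominated, f.map_rel_iff]

theorem comp_orderIso_iff [Preorder ι] [Preorder ι'] [LE β] (e : ι' ≃o ι) {σ : ι → β} :
    RepeatDominated (σ ∘ e) ↔ RepeatDominated σ := by
  simp [RepeatDominated, e.surjective.forall]

theorem card_congr [Preorder ι] [Preorder ι'] [LE β] [LE γ]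
    (e : ι ≃o ι') (f : β ≃o γ) :
    Nat.card (RepeatDominatedWord ι β) = Nat.card (RepeatDominatedWord ι' γ) :=
  Nat.card_congr <| (e.toEquiv.arrowCongr f.toEquiv).subtypeEquiv fun σ => by
    change _ ↔ RepeatDominated (f.toOrderEmbedding ∘ σ ∘ e.symm)
    rw [orderEmbedding_comp_iff, comp_orderIso_iff]

end RepeatDominated

section Bottom

variable {ι β : Type*} [PartialOrder β] [OrderBot β]

theorem repeatDominated_iff_preimage_bot [LinearOrder ι] {σ : ι → β} :
    RepeatDominated σ ↔
      ((σ ⁻¹' {⊥}).Subsingleton ∨ IsUpperSet (σ ⁻¹' {⊥})) ∧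
        RepeatDominated fun i : {i // σ i ≠ ⊥} => σ i := by
  constructor
  · refine fun h => ⟨or_iff_not_imp_left.2 fun hσ => ?_, fun i j l hij heq hil => h hij heq hil⟩
    obtain ⟨i, hi, j, hj, hij⟩ := (Set.not_subsingleton_iff.1 hσ).exists_lt
    have eq_bot {a b y : ι} (hab : a < b) (ha : σ a = ⊥) (hb : σ b = ⊥) (hay : a < y) : σ y = ⊥ :=
      le_bot_iff.1 ((h hab (ha.trans hb.symm) hay).trans_eq ha)
    intro x y hxy hx
    rcases hxy.eq_or_lt with rfl | hxy
    · exact hx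
    rcases lt_or_ge i y with hiy | hyi
    · exact eq_bot hij hi hj hiy
    · exact eq_bot (hxy.trans_le hyi) hx hi hxy
  · rintro ⟨hbot, h⟩ i j l hij heq hil
    by_cases hl : σ l = ⊥
    · exact hl ▸ bot_le
    have hi : σ i ≠ ⊥ := fun hi => hbot.elim
      (fun hsub => hij.ne (hsub hi (heq.symm.trans hi)))
      (fun hup => hl (hup hil.le hi))
    exact @h ⟨i, hi⟩ ⟨j, heq ▸ hi⟩ ⟨l, hl⟩ hij heq hil

variable [Fintype ι]

/-- The set of positions of the smallest letter. -/
def bottomPositions [DecidableEq β] (σ : ι → β) : Finset ι := {i | σ i = ⊥}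

theorem mem_bottomPositions [DecidableEq β] {σ : ι → β} {i : ι} :
    i ∈ bottomPositions σ ↔ σ i = ⊥ := by
  simp [bottomPositions]

/-- A word whose smallest letter occurs exactly at the positions in `S` is determined by the word
left after deleting these positions. -/
def bottomFiberEquiv [DecidableEq ι] [DecidableEq β] (S : Finset ι) :
    {σ : ι → β // bottomPositions σ = S} ≃ ({i // i ∉ S} → {b : β // b ≠ ⊥}) where
  toFun σ i := ⟨σ.1 i, fun h => i.2 (σ.2.subset (mem_bottomPositions.2 h))⟩
  invFun ρ := ⟨fun i => if h : i ∈ S then ⊥ else ρ ⟨i, h⟩, by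
    ext i
    by_cases h : i ∈ S <;> simp [mem_bottomPositions, h, (ρ _).2]⟩
  left_inv := by
    rintro ⟨σ, rfl⟩
    ext i
    by_cases h : σ i = ⊥ <;> simp [mem_bottomPositions, h]
  right_inv ρ := by
    ext ⟨i, hi⟩
    simp [hi]

theorem repeatDominated_iff_bottomPositions [LinearOrder ι] [DecidableEq β] {σ : ι → β} :
    RepeatDominated σ ↔
      (#(bottomPositions σ) ≤ 1 ∨ IsUpperSet (bottomPositions σ : Set ι)) ∧
        RepeatDominated (bottomFiberEquiv (bottomPositions σ) ⟨σ, rfl⟩) := by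
  have coe_eq : (bottomPositions σ : Set ι) = σ ⁻¹' {⊥} := by
    ext i
    exact mem_bottomPositions
  have restrict_iff : RepeatDominated (fun i : {i // σ i ≠ ⊥} => σ i) ↔
      RepeatDominated (bottomFiberEquiv (bottomPositions σ) ⟨σ, rfl⟩) := by
    simp [RepeatDominated, bottomFiberEquiv, mem_bottomPositions]
  rw [repeatDominated_iff_preimage_bot, restrict_iff, ← coe_eq, Finset.card_le_one_iff_subsingleton]

theorem card_repeatDominated_and_bottomPositions_eq [LinearOrder ι] [DecidableEq β] {S : Finset ι}
    (hS : #S ≤ 1 ∨ IsUpperSet (S : Set ι)) :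
    Nat.card {σ : ι → β // RepeatDominated σ ∧ bottomPositions σ = S} =
      Nat.card (RepeatDominatedWord {i // i ∉ S} {b : β // b ≠ ⊥}) := by
  simp_rw [and_comm (b := bottomPositions _ = S)]
  rw [← Nat.card_congr (Equiv.subtypeSubtypeEquivSubtypeInter _ _)]
  refine Nat.card_congr ((bottomFiberEquiv S).subtypeEquiv ?_)
  rintro ⟨σ, rfl⟩
  exact repeatDominated_iff_bottomPositions.trans (and_iff_right hS)

open scoped Classical in
theorem card_repeatDominatedWord_eq_sum [LinearOrder ι] [Finite β] :
    Nat.card (RepeatDominatedWord ι β) = ∑ S : Finset ι with #S ≤ 1 ∨ IsUpperSet (S : Set ι),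
      Nat.card (RepeatDominatedWord {i // i ∉ S} {b : β // b ≠ ⊥}) := by
  rw [← Nat.card_congr (Equiv.sigmaFiberEquiv
    fun σ : RepeatDominatedWord ι β => bottomPositions σ.1), Nat.card_sigma, Finset.sum_filter]
  refine Finset.sum_congr rfl fun S _ => ?_
  rw [Nat.card_congr (Equiv.subtypeSubtypeEquivSubtypeInter _ (bottomPositions · = S))]
  split_ifs with hS
  · exact card_repeatDominated_and_bottomPositions_eq hS
  · have : IsEmpty {σ : ι → β // RepeatDominated σ ∧ bottomPositions σ = S} :=
      ⟨fun ⟨σ, hσ, hσS⟩ => hS (hσS ▸ (repeatDominated_iff_bottomPositions.1 hσ).1)⟩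
    exact Nat.card_of_isEmpty

end Bottom

section UpperSet

variable {ι : Type*} [LinearOrder ι]

theorem finset_eq_of_isUpperSet_of_card_eq {S T : Finset ι} (hS : IsUpperSet (S : Set ι))
    (hT : IsUpperSet (T : Set ι)) (h : #S = #T) : S = T := by
  rcases hS.total hT with hST | hTS
  · exact Finset.eq_of_subset_of_card_le (Finset.coe_subset.1 hST) h.ge
  · exact (Finset.eq_of_subset_of_card_le (Finset.coe_subset.1 hTS) h.le).symm

variable [Fintype ι]

theorem exists_isUpperSet_card_eq {j : ℕ} (hj : j ≤ Fintype.card ι) :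
    ∃ S : Finset ι, IsUpperSet (S : Set ι) ∧ #S = j := by
  induction j with
  | zero => exact ⟨∅, by simpa using isUpperSet_empty, rfl⟩
  | succ j ih =>
    obtain ⟨S, hS, hcard⟩ := ih (Nat.le_of_succ_le hj)
    have hne : Sᶜ.Nonempty := by
      rw [← Finset.card_pos, Finset.card_compl]
      lia
    obtain ⟨m, hm, hmax⟩ := Sᶜ.exists_max_image id hne
    refine ⟨insert m S, ?_, by rw [Finset.card_insert_of_notMem (Finset.mem_compl.1 hm), hcard]⟩
    intro x y hxy hx
    by_contra hy
    obtain ⟨hym, hyS⟩ := not_or.1 (mt Finset.mem_insert.2 hy)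
    rcases Finset.mem_insert.1 hx with rfl | hxS
    · exact hym ((hmax y (Finset.mem_compl.2 hyS)).antisymm hxy)
    · exact hyS (hS hxy hxS)

theorem sum_filter_card_le_one {ι M : Type*} [Fintype ι] [AddCommMonoid M] (g : ℕ → M) :
    ∑ S : Finset ι with #S ≤ 1, g #S = g 0 + Fintype.card ι • g 1 := by
  classical
  have filter_eq : ({S | #S ≤ 1} : Finset (Finset ι)) =
      Finset.univ.powersetCard 0 ∪ Finset.univ.powersetCard 1 := by
    ext S
    simp [Nat.le_one_iff_eq_zero_or_eq_one]
  rw [filter_eq, Finset.sum_union (Finset.pairwise_disjoint_powersetCard _ zero_ne_one),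
    Finset.sum_powersetCard, Finset.sum_powersetCard]
  simp

open scoped Classical in
theorem sum_filter_isUpperSet {M : Type*} [AddCommMonoid M] (m : ℕ) (g : ℕ → M) :
    ∑ S : Finset ι with m ≤ #S ∧ IsUpperSet (S : Set ι), g #S =
      ∑ j ∈ Finset.Icc m (Fintype.card ι), g j := by
  refine Finset.sum_nbij Finset.card (fun S hS => ?_) (fun S hS T hT hcard => ?_)
    (fun j hj => ?_) fun _ _ => rfl
  · exact Finset.mem_Icc.2 ⟨(Finset.mem_filter.1 hS).2.1, S.card_le_univ⟩
  · exact finset_eq_of_isUpperSet_of_card_eq (Finset.mem_filter.1 hS).2.2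
      (Finset.mem_filter.1 hT).2.2 hcard
  · obtain ⟨hmj, hjn⟩ := Finset.mem_Icc.1 hj
    obtain ⟨S, hS, rfl⟩ := exists_isUpperSet_card_eq hjn
    exact ⟨S, Finset.mem_filter.2 ⟨Finset.mem_univ S, hmj, hS⟩, rfl⟩

open scoped Classical in
theorem sum_filter_card_le_one_or_isUpperSet {M : Type*} [AddCommMonoid M] (g : ℕ → M) :
    ∑ S : Finset ι with #S ≤ 1 ∨ IsUpperSet (S : Set ι), g #S =
      g 0 + Fintype.card ι • g 1 + ∑ j ∈ Finset.Icc 2 (Fintype.card ι), g j := by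
  have or_iff (S : Finset ι) : #S ≤ 1 ∨ IsUpperSet (S : Set ι) ↔
      #S ≤ 1 ∨ 2 ≤ #S ∧ IsUpperSet (S : Set ι) := by
    grind
  simp only [or_iff, Finset.filter_or]
  rw [Finset.sum_union (Finset.disjoint_filter.2 fun S _ hle hge => hle.not_gt hge.1),
    sum_filter_card_le_one, sum_filter_isUpperSet]

end UpperSet

theorem card_repeatDominatedWord_fin_succ (n k : ℕ) :
    Nat.card (RepeatDominatedWord (Fin n) (Fin (k + 1))) =
      Nat.card (RepeatDominatedWord (Fin n) (Fin k)) +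
        n * Nat.card (RepeatDominatedWord (Fin (n - 1)) (Fin k)) +
        ∑ j ∈ Finset.Icc 2 n, Nat.card (RepeatDominatedWord (Fin (n - j)) (Fin k)) := by
  classical
  have card_delete (S : Finset (Fin n)) :
      Nat.card (RepeatDominatedWord {i // i ∉ S} {b : Fin (k + 1) // b ≠ ⊥}) =
        Nat.card (RepeatDominatedWord (Fin (n - #S)) (Fin k)) :=
    RepeatDominated.card_congr
      (Fintype.orderIsoFinOfCardEq _ (by simp [Fintype.card_subtype_compl])).symm
      (finSuccAboveOrderIso 0).symm
  rw [card_repeatDominatedWord_eq_sum]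
  simp only [card_delete]
  simpa using sum_filter_card_le_one_or_isUpperSet (ι := Fin n)
    fun j => Nat.card (RepeatDominatedWord (Fin (n - j)) (Fin k))

/-- f_{112,121}(n,k) = f_{112,121}(n,k-1) + n·f_{112,121}(n-1,k-1)
+ ∑_{j=2}^{n} f_{112,121}(n-j,k-1) for n, k ≥ 1. -/
theorem avoid_112_121_recurrence (n k : ℕ) (hn : 1 ≤ n) (hk : 1 ≤ k) :
    avoiders n k {[1, 1, 2], [1, 2, 1]} =
      avoiders n (k - 1) {[1, 1, 2], [1, 2, 1]} +
        n * avoiders (n - 1) (k - 1) {[1, 1, 2], [1, 2, 1]} +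
        ∑ j ∈ Finset.Icc 2 n, avoiders (n - j) (k - 1) {[1, 1, 2], [1, 2, 1]} := by
  obtain ⟨k, rfl⟩ := Nat.exists_eq_add_of_le' hk
  simpa only [avoiders_112_121_eq_card, Nat.add_sub_cancel] using
    card_repeatDominatedWord_fin_succ n k
end

section
/- For all integers n ≥ 2 and k ≥ 1, the numbers f_{112,211}(n,k) of words in [k]^n avoiding both patterns 112 and 211 satisfy the recurrence f_{112,211}(n,k) = f_{112,211}(n,k-1) + n · f_{112,211}(n-1,k-1) + f_{112,211}(n-2,k-1) + [n ≥ 3], where [n ≥ 3] equals 1 if n ≥ 3 and 0 otherwise. -/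
/-!
Avoiding both 112 and 211 means that any two equal letters enclose all larger letters. For the
smallest letter this only concerns the set of its positions, which must then be empty, a singleton,
the two end positions, or everything. Deleting the smallest letter leaves an arbitrary avoiding word
over the other letters, and summing over the four kinds of position sets gives the recurrence. In a
word of length two the end positions are everything, hence the correction term `[n ≥ 3]`.
-/

section Enclosing

variable {α β γ δ : Type*}

/-- A word is enclosing if any two equal letters enclose all larger letters. This is the
simultaneous avoidance of 112 and 211, for words indexed by an arbitrary order so that letters can
be deleted without renumbering the positions. -/
def IsEnclosing [LT α] [LT γ] (σ : α → γ) : Prop :=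
  ∀ ⦃i j c⦄, i < j → σ i = σ j → σ i < σ c → i < c ∧ c < j

/-- A set of positions is enclosing if any two of its elements enclose its complement. These are
the sets of positions that the smallest letter can occupy in an enclosing word. -/
def IsEnclosingSet [LT α] (s : Finset α) : Prop :=
  ∀ ⦃i j c⦄, i ∈ s → j ∈ s → i < j → c ∉ s → i < c ∧ c < j

theorem IsEnclosing.comp_orderEmbedding [Preorder α] [Preorder β] [LT γ] {σ : α → γ}
    (hσ : IsEnclosing σ) (f : β ↪o α) : IsEnclosing (σ ∘ f) := by
  intro i j c hij heq hlt
  simpa only [f.lt_iff_lt] using hσ (f.lt_iff_lt.2 hij) heq hlt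

theorem isEnclosing_comp_orderIso [Preorder α] [Preorder β] [LT γ] {σ : α → γ} (e : β ≃o α) :
    IsEnclosing (σ ∘ e) ↔ IsEnclosing σ := by
  refine ⟨fun h => ?_, fun h => h.comp_orderEmbedding e.toOrderEmbedding⟩
  have hσ : (σ ∘ e) ∘ e.symm = σ := funext fun i => congrArg σ (e.apply_symm_apply i)
  exact hσ ▸ h.comp_orderEmbedding e.symm.toOrderEmbedding

theorem isEnclosing_orderEmbedding_comp [LT α] [PartialOrder γ] [Preorder δ] {σ : α → γ}
    (g : γ ↪o δ) : IsEnclosing (g ∘ σ) ↔ IsEnclosing σ := by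
  simp [IsEnclosing]

theorem card_isEnclosing_congr [Preorder α] [Preorder β] [LT γ] (e : α ≃o β) :
    Nat.card {σ : α → γ // IsEnclosing σ} = Nat.card {σ : β → γ // IsEnclosing σ} :=
  Nat.card_congr <| (e.toEquiv.arrowCongr (Equiv.refl γ)).subtypeEquiv fun _ =>
    (isEnclosing_comp_orderIso e.symm).symm

end Enclosing

section EnclosingSet

variable {α : Type*}

theorem isEnclosingSet_of_card_le_one [Preorder α] {s : Finset α} (hs : s.card ≤ 1) :
    IsEnclosingSet s :=
  fun _ _ _ hi hj hij _ => absurd (Finset.card_le_one.1 hs _ hi _ hj) hij.ne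

theorem isEnclosingSet_bot_top [PartialOrder α] [BoundedOrder α] [DecidableEq α] :
    IsEnclosingSet ({⊥, ⊤} : Finset α) := by
  intro i j c hi hj hij hc
  simp only [Finset.mem_insert, Finset.mem_singleton, not_or] at hi hj hc
  have hi_bot : i = ⊥ := hi.resolve_right fun h => not_top_lt (h ▸ hij)
  have hj_top : j = ⊤ := hj.resolve_left fun h => not_lt_bot (h ▸ hij)
  exact ⟨hi_bot ▸ bot_lt_iff_ne_bot.2 hc.1, hj_top ▸ lt_top_iff_ne_top.2 hc.2⟩

theorem isEnclosingSet_univ [LT α] [Fintype α] :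
    IsEnclosingSet (Finset.univ : Finset α) :=
  fun _ _ c _ _ _ hc => absurd (Finset.mem_univ c) hc

theorem IsEnclosingSet.eq_bot_top [LinearOrder α] [BoundedOrder α] {s : Finset α}
    (hs : IsEnclosingSet s) (hcard : 1 < s.card) {c : α} (hc : c ∉ s) : s = {⊥, ⊤} := by
  obtain ⟨i, hi, j, hj, hij⟩ : ∃ i ∈ s, ∃ j ∈ s, i < j := by
    obtain ⟨a, ha, b, hb, hab⟩ := Finset.one_lt_card.1 hcard
    exact hab.lt_or_gt.elim (fun h => ⟨a, ha, b, hb, h⟩) fun h => ⟨b, hb, a, ha, h⟩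
  have hbot : ⊥ ∈ s := by
    by_contra h
    exact not_lt_bot (hs hi hj hij h).1
  have htop : ⊤ ∈ s := by
    by_contra h
    exact not_top_lt (hs hi hj hij h).2
  ext x
  simp only [Finset.mem_insert, Finset.mem_singleton]
  refine ⟨fun hx => ?_, fun hx => hx.elim (· ▸ hbot) (· ▸ htop)⟩
  by_contra! hne
  have hcx : c < x := (hs hbot hx hne.1.bot_lt hc).2
  have hxc : x < c := (hs hx htop hne.2.lt_top hc).1
  exact hcx.asymm hxc

theorem isEnclosingSet_iff [LinearOrder α] [BoundedOrder α] [Fintype α] {s : Finset α} :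
    IsEnclosingSet s ↔ s.card ≤ 1 ∨ s = {⊥, ⊤} ∨ s = Finset.univ := by
  constructor
  · intro hs
    by_contra! h
    obtain ⟨c, hc⟩ : ∃ c, c ∉ s := by simpa [Finset.eq_univ_iff_forall] using h.2.2
    exact h.2.1 (hs.eq_bot_top h.1 hc)
  · rintro (h | rfl | rfl)
    exacts [isEnclosingSet_of_card_le_one h, isEnclosingSet_bot_top, isEnclosingSet_univ]

variable {M : Type*} [AddCommMonoid M] [Fintype α]

theorem sum_card_le_one (f : ℕ → M) :
    ∑ s : Finset α with s.card ≤ 1, f s.card = f 0 + Fintype.card α • f 1 := by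
  classical
  have hfilter : ({s : Finset α | s.card ≤ 1} : Finset (Finset α)) =
      insert ∅ (Finset.univ.image singleton) := by
    ext s
    simp [Nat.le_one_iff_eq_zero_or_eq_one, Finset.card_eq_one, eq_comm]
  rw [hfilter, Finset.sum_insert (by simp), Finset.sum_image Finset.singleton_injective.injOn]
  simp

theorem sum_bot_top_univ [PartialOrder α] [BoundedOrder α] [Nontrivial α] [DecidableEq α]
    (f : ℕ → M) :
    ∑ s ∈ ({{⊥, ⊤}, Finset.univ} : Finset (Finset α)), f s.card =
      f 2 + if 3 ≤ Fintype.card α then f (Fintype.card α) else 0 := by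
  have hcard : ({⊥, ⊤} : Finset α).card = 2 := Finset.card_pair bot_ne_top
  split_ifs with h
  · have hne : ({⊥, ⊤} : Finset α) ≠ Finset.univ := fun he => by
      rw [he, Finset.card_univ] at hcard
      omega
    rw [Finset.sum_pair hne, hcard, Finset.card_univ]
  · have heq : ({⊥, ⊤} : Finset α) = Finset.univ :=
      Finset.eq_univ_of_card _ (by have := Fintype.one_lt_card (α := α); omega)
    rw [← heq, Finset.pair_eq_singleton, Finset.sum_singleton, hcard, add_zero]

open Classical in
theorem sum_isEnclosingSet [LinearOrder α] [BoundedOrder α] [Nontrivial α] (f : ℕ → M) :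
    ∑ s : Finset α with IsEnclosingSet s, f s.card =
      f 0 + Fintype.card α • f 1 + f 2 +
        if 3 ≤ Fintype.card α then f (Fintype.card α) else 0 := by
  have hdisj : Disjoint ({s : Finset α | s.card ≤ 1} : Finset (Finset α))
      {{⊥, ⊤}, Finset.univ} := by
    simp [Fintype.one_lt_card]
  have hunion : ({s : Finset α | IsEnclosingSet s} : Finset (Finset α)) =
      ({s : Finset α | s.card ≤ 1} : Finset (Finset α)) ∪ {{⊥, ⊤}, Finset.univ} := by
    ext s
    simp only [Finset.mem_filter_univ, isEnclosingSet_iff, Finset.mem_union, Finset.mem_insert,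
      Finset.mem_singleton]
  rw [hunion, Finset.sum_union hdisj, sum_card_le_one, sum_bot_top_univ, add_assoc _ (f 2)]

end EnclosingSet

section PadZero

variable {α : Type*} [DecidableEq α] {k : ℕ}

/-- The word with smallest letter `0` exactly at the positions in `s` and the letters of `τ`,
shifted up by one, elsewhere. -/
def padZero (s : Finset α) (τ : {i // i ∉ s} → Fin k) (i : α) : Fin (k + 1) :=
  if h : i ∈ s then 0 else (τ ⟨i, h⟩).succ

theorem padZero_eq_zero_iff {s : Finset α} {τ : {i // i ∉ s} → Fin k} {i : α} :
    padZero s τ i = 0 ↔ i ∈ s := by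
  by_cases h : i ∈ s <;> simp [padZero, h]

theorem padZero_comp_val (s : Finset α) (τ : {i // i ∉ s} → Fin k) :
    padZero s τ ∘ Subtype.val = Fin.succOrderEmb k ∘ τ := by
  ext i
  simp [padZero, i.2]

theorem isEnclosing_padZero_iff [Preorder α] {s : Finset α} {τ : {i // i ∉ s} → Fin k} :
    IsEnclosing (padZero s τ) ↔ IsEnclosingSet s ∧ IsEnclosing τ := by
  rw [← isEnclosing_orderEmbedding_comp (σ := τ) (Fin.succOrderEmb k), ← padZero_comp_val]
  constructor
  · refine fun h => ⟨fun i j c hi hj hij hc => ?_, h.comp_orderEmbedding (OrderEmbedding.subtype _)⟩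
    rw [← padZero_eq_zero_iff (τ := τ)] at hi hj hc
    exact h hij (hi.trans hj.symm) (hi ▸ Fin.pos_of_ne_zero hc)
  · rintro ⟨hs, hτ⟩ i j c hij heq hlt
    have hc : c ∉ s := fun hc => Fin.not_lt_zero _ (padZero_eq_zero_iff.2 hc ▸ hlt)
    by_cases hi : i ∈ s
    · exact hs hi (padZero_eq_zero_iff.1 (heq ▸ padZero_eq_zero_iff.2 hi)) hij hc
    · have hj : j ∉ s := fun hj => hi (padZero_eq_zero_iff.1 (heq ▸ padZero_eq_zero_iff.2 hj))
      exact @hτ ⟨i, hi⟩ ⟨j, hj⟩ ⟨c, hc⟩ hij heq hlt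

theorem padZero_injective :
    Function.Injective fun x : (s : Finset α) × ({i // i ∉ s} → Fin k) => padZero x.1 x.2 := by
  rintro ⟨s, τ⟩ ⟨t, υ⟩ (h : padZero s τ = padZero t υ)
  obtain rfl : s = t := by
    ext i
    rw [← padZero_eq_zero_iff (τ := τ), h, padZero_eq_zero_iff]
  have hsucc : Fin.succOrderEmb k ∘ τ = Fin.succOrderEmb k ∘ υ := by
    rw [← padZero_comp_val, h, padZero_comp_val]
  rw [(Fin.succOrderEmb k).injective.comp_left hsucc]

theorem exists_padZero_eq [Finite α] (σ : α → Fin (k + 1)) :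
    ∃ (s : Finset α) (τ : {i // i ∉ s} → Fin k), padZero s τ = σ := by
  have := Fintype.ofFinite α
  refine ⟨({i | σ i = 0} : Finset α), fun i => (σ i).pred (by simpa using i.2), funext fun i => ?_⟩
  by_cases h : σ i = 0 <;> simp [padZero, h]

/-- Padding with zeros, restricted to enclosing words. -/
def padZeroEnclosing [Preorder α] (x : (s : {s : Finset α // IsEnclosingSet s}) ×
    {τ : {i // i ∉ s.1} → Fin k // IsEnclosing τ}) : {σ : α → Fin (k + 1) // IsEnclosing σ} :=
  ⟨padZero x.1 x.2.1, isEnclosing_padZero_iff.2 ⟨x.1.2, x.2.2⟩⟩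

theorem padZeroEnclosing_bijective [Preorder α] [Finite α] :
    Function.Bijective (padZeroEnclosing (α := α) (k := k)) := by
  constructor
  · rintro ⟨⟨s, hs⟩, τ, hτ⟩ ⟨⟨t, ht⟩, υ, hυ⟩ h
    cases padZero_injective (a₁ := ⟨s, τ⟩) (a₂ := ⟨t, υ⟩) (congrArg Subtype.val h)
    rfl
  · rintro ⟨σ, hσ⟩
    obtain ⟨s, τ, rfl⟩ := exists_padZero_eq σ
    obtain ⟨hs, hτ⟩ := isEnclosing_padZero_iff.1 hσ
    exact ⟨⟨⟨s, hs⟩, τ, hτ⟩, rfl⟩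

end PadZero

open Classical in
theorem card_isEnclosing_succ {α : Type*} {k : ℕ} [Preorder α] [Fintype α] :
    Nat.card {σ : α → Fin (k + 1) // IsEnclosing σ} =
      ∑ s : Finset α with IsEnclosingSet s,
        Nat.card {τ : {i // i ∉ s} → Fin k // IsEnclosing τ} := by
  rw [← Nat.card_eq_of_bijective _ padZeroEnclosing_bijective, Nat.card_sigma]
  exact (Finset.sum_subtype _ (fun s => Finset.mem_filter_univ s)
    fun s => Nat.card {τ : {i // i ∉ s} → Fin k // IsEnclosing τ}).symm

section Avoiders

variable {n k : ℕ}

theorem wordContains_iff_cmp {σ : Fin n → Fin k} {τ : List ℕ} :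
    WordContains σ τ ↔ ∃ f : Fin τ.length → Fin n, StrictMono f ∧
      ∀ a b, a < b → cmp (σ (f a)) (σ (f b)) = cmp (τ.get a) (τ.get b) := by
  refine exists_congr fun f => and_congr_right fun _ => ⟨fun h a b _ => ?_, fun h a b => ?_⟩
  · rcases lt_trichotomy (τ.get a) (τ.get b) with hlt | heq | hgt
    · rw [hlt.cmp_eq_lt, ((h a b).1.2 hlt).cmp_eq_lt]
    · rw [heq.cmp_eq_eq, ((h a b).2.2 heq).cmp_eq_eq]
    · rw [hgt.cmp_eq_gt, ((h b a).1.2 hgt).cmp_eq_gt]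
  · have hcmp : cmp (σ (f a)) (σ (f b)) = cmp (τ.get a) (τ.get b) := by
      rcases lt_trichotomy a b with hab | rfl | hba
      · exact h a b hab
      · simp only [cmp_self_eq_eq]
      · exact cmp_eq_cmp_symm.1 (h b a hba)
    exact ⟨lt_iff_lt_of_cmp_eq_cmp hcmp, eq_iff_eq_of_cmp_eq_cmp hcmp⟩

theorem wordContains_three_iff {σ : Fin n → Fin k} {x y z : ℕ} :
    WordContains σ [x, y, z] ↔ ∃ a b c, a < b ∧ b < c ∧
      cmp (σ a) (σ b) = cmp x y ∧ cmp (σ b) (σ c) = cmp y z ∧ cmp (σ a) (σ c) = cmp x z := by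
  rw [wordContains_iff_cmp]
  constructor
  · rintro ⟨f, hf, h⟩
    change Fin 3 → Fin n at f
    have h01 : (0 : Fin 3) < 1 := by decide
    have h12 : (1 : Fin 3) < 2 := by decide
    have h02 := h01.trans h12
    exact ⟨f 0, f 1, f 2, hf h01, hf h12, h 0 1 h01, h 1 2 h12, h 0 2 h02⟩
  · rintro ⟨a, b, c, hab, hbc, hxy, hyz, hxz⟩
    refine ⟨(![a, b, c] : Fin 3 → Fin n), by simp [hab, hbc], ?_⟩
    simp [Fin.forall_fin_succ, hxy, hyz, hxz]

theorem wordContains_112_iff_s12 {σ : Fin n → Fin k} :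
    WordContains σ [1, 1, 2] ↔ ∃ a b c, a < b ∧ b < c ∧ σ a = σ b ∧ σ b < σ c := by
  have hcmp : cmp 1 2 = Ordering.lt := by decide
  simp only [wordContains_three_iff, cmp_self_eq_eq, hcmp, cmp_eq_eq_iff, cmp_eq_lt_iff]
  grind

theorem wordContains_211_iff {σ : Fin n → Fin k} :
    WordContains σ [2, 1, 1] ↔ ∃ a b c, a < b ∧ b < c ∧ σ b = σ c ∧ σ c < σ a := by
  have hcmp : cmp 2 1 = Ordering.gt := by decide
  simp only [wordContains_three_iff, cmp_self_eq_eq, hcmp, cmp_eq_eq_iff, cmp_eq_gt_iff]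
  grind

theorem avoids_112_211_iff_isEnclosing {σ : Fin n → Fin k} :
    (∀ τ ∈ ({[1, 1, 2], [2, 1, 1]} : Set (List ℕ)), ¬ WordContains σ τ) ↔ IsEnclosing σ := by
  simp only [Set.mem_insert_iff, Set.mem_singleton_iff, forall_eq_or_imp, forall_eq,
    wordContains_112_iff_s12, wordContains_211_iff]
  constructor
  · rintro ⟨h112, h211⟩ i j c hij heq hlt
    constructor
    · by_contra! hci
      have hne : c ≠ i := fun h => hlt.ne' (congrArg σ h)
      exact h211 ⟨c, i, j, lt_of_le_of_ne hci hne, hij, heq, heq ▸ hlt⟩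
    · by_contra! hjc
      have hne : j ≠ c := fun h => hlt.ne (heq.trans (congrArg σ h))
      exact h112 ⟨i, j, c, hij, lt_of_le_of_ne hjc hne, heq, heq ▸ hlt⟩
  · refine fun h => ⟨?_, ?_⟩
    · rintro ⟨a, b, c, hab, hbc, heq, hlt⟩
      exact hbc.asymm (h hab heq (heq ▸ hlt)).2
    · rintro ⟨a, b, c, hab, hbc, heq, hlt⟩
      exact hab.asymm (h hbc heq (heq ▸ hlt)).1

theorem card_isEnclosing_eq_avoiders {α : Type*} [LinearOrder α] [Fintype α]
    (hα : Fintype.card α = n) :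
    Nat.card {σ : α → Fin k // IsEnclosing σ} = avoiders n k {[1, 1, 2], [2, 1, 1]} := by
  rw [avoiders, ← card_isEnclosing_congr (Fintype.orderIsoFinOfCardEq α hα)]
  exact Nat.card_congr (Equiv.subtypeEquivRight fun _ => avoids_112_211_iff_isEnclosing.symm)

open Classical in
theorem avoiders_112_211_succ :
    avoiders n (k + 1) {[1, 1, 2], [2, 1, 1]} =
      ∑ s : Finset (Fin n) with IsEnclosingSet s,
        avoiders (n - s.card) k {[1, 1, 2], [2, 1, 1]} := by
  rw [← card_isEnclosing_eq_avoiders (Fintype.card_fin n), card_isEnclosing_succ]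
  exact Finset.sum_congr rfl fun s _ => card_isEnclosing_eq_avoiders (by simp)

theorem avoiders_zero_left {T : Set (List ℕ)} (hT : [] ∉ T) : avoiders 0 k T = 1 := by
  have havoid (σ : Fin 0 → Fin k) : ∀ τ ∈ T, ¬ WordContains σ τ := by
    rintro (_ | ⟨x, τ⟩) hτ ⟨f, -⟩
    exacts [hT hτ, (f ⟨0, by simp⟩).elim0]
  rw [avoiders, Nat.card_congr (Equiv.subtypeUnivEquiv havoid)]
  simp

end Avoiders

/-- f_{112,211}(n,k) = f_{112,211}(n,k-1) + n·f_{112,211}(n-1,k-1) + f_{112,211}(n-2,k-1)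
+ [n ≥ 3], for n ≥ 2, k ≥ 1. -/
theorem avoid_112_211_recurrence (n k : ℕ) (hn : 2 ≤ n) (hk : 1 ≤ k) :
    avoiders n k {[1, 1, 2], [2, 1, 1]} =
      avoiders n (k - 1) {[1, 1, 2], [2, 1, 1]} +
        n * avoiders (n - 1) (k - 1) {[1, 1, 2], [2, 1, 1]} +
        avoiders (n - 2) (k - 1) {[1, 1, 2], [2, 1, 1]} +
        (if 3 ≤ n then 1 else 0) := by
  obtain ⟨m, rfl⟩ := Nat.exists_eq_add_of_le' hn
  obtain ⟨j, rfl⟩ := Nat.exists_eq_add_of_le' hk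
  classical
  rw [avoiders_112_211_succ, sum_isEnclosingSet
    fun i => avoiders (m + 2 - i) j {[1, 1, 2], [2, 1, 1]}]
  simp [avoiders_zero_left]
end
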